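/- Let A be a dg category and let B be a dg category with translations. Let f: A_∞ → B_∞ be an A∞-functor. Define F(A[i]) := f(A)[i] on objects, and for every chain of n composable morphisms ⟨i_{m+1}|α^m|i_m⟩ of A^[•] define F_n(s⟨i_{n+1}|α^n|i_n⟩, …, s⟨i_2|α^1|i_1⟩) := ⟨i_{n+1}| f_n(sα^n, …, sα^1) |i_1⟩ · (−1)^{i_1+i_2+⋯+i_{n+1}}. Then F is an A∞-functor (A^[•])_∞ → B_∞ extending f along the inclusion A → A^[•], A ↦ A[0]. -/

import Mathlib

/-! Core formal framework: dg categories over a field `k`, given by explicit data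
(`DGData`) together with the dg-category axioms (`IsDGCat`), following the
conventions of the paper: hom-sets are `ℤ`-graded `k`-vector spaces, `d` has
degree `1`, composition is associative of degree `0`, identities are closed of
degree `0`. -/

namespace P

universe u v

structure DGData (k : Type) [Field k] where
  Obj : Type u
  Hom : Obj → Obj → ℤ → Type v
  homAdd : ∀ A B i, AddCommGroup (Hom A B i)
  homMod : ∀ A B i, Module k (Hom A B i)
  d : ∀ {A B : Obj} {i : ℤ}, Hom A B i → Hom A B (i + 1)
  comp : ∀ {A B C : Obj} {i j : ℤ}, Hom B C j → Hom A B i → Hom A C (j + i)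
  id : ∀ A : Obj, Hom A A 0

attribute [instance] DGData.homAdd DGData.homMod

variable {k : Type} [Field k]

/-- Transport of a morphism along an equality of degrees. -/
def DGData.cast (D : DGData k) {A B : D.Obj} {i i' : ℤ} (h : i = i')
    (x : D.Hom A B i) : D.Hom A B i' := h ▸ x

/-- Transport of a morphism along equalities of its source, target and degree. -/
def DGData.hcast (D : DGData k) {A A' B B' : D.Obj} {i i' : ℤ}
    (hA : A = A') (hB : B = B') (hi : i = i') (x : D.Hom A B i) :
    D.Hom A' B' i' := by
  subst hA; subst hB; subst hi; exact x

/-- The axioms making the data `D` a dg category: hom-sets are complexes of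
`k`-vector spaces, composition is `k`-bilinear, the graded Leibniz rule holds,
composition is associative, and identities are closed two-sided units. -/
structure IsDGCat (D : DGData k) : Prop where
  d_add : ∀ {A B : D.Obj} {g : ℤ} (x y : D.Hom A B g), D.d (x + y) = D.d x + D.d y
  d_smul : ∀ {A B : D.Obj} {g : ℤ} (c : k) (x : D.Hom A B g), D.d (c • x) = c • D.d x
  comp_add_left : ∀ {A B C : D.Obj} {g h : ℤ} (β₁ β₂ : D.Hom B C h) (α : D.Hom A B g),
      D.comp (β₁ + β₂) α = D.comp β₁ α + D.comp β₂ α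
  comp_add_right : ∀ {A B C : D.Obj} {g h : ℤ} (β : D.Hom B C h) (α₁ α₂ : D.Hom A B g),
      D.comp β (α₁ + α₂) = D.comp β α₁ + D.comp β α₂
  comp_smul_left : ∀ {A B C : D.Obj} {g h : ℤ} (c : k) (β : D.Hom B C h) (α : D.Hom A B g),
      D.comp (c • β) α = c • D.comp β α
  comp_smul_right : ∀ {A B C : D.Obj} {g h : ℤ} (c : k) (β : D.Hom B C h) (α : D.Hom A B g),
      D.comp β (c • α) = c • D.comp β α
  d_d : ∀ {A B : D.Obj} {g : ℤ} (x : D.Hom A B g), D.d (D.d x) = 0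
  leibniz : ∀ {A B C : D.Obj} {g h : ℤ} (β : D.Hom B C h) (α : D.Hom A B g),
      D.d (D.comp β α) =
        D.cast (by ring) (D.comp (D.d β) α) +
          ((-1 : k) ^ h) • D.cast (by ring) (D.comp β (D.d α))
  assoc : ∀ {A B C E : D.Obj} {g h l : ℤ} (γ : D.Hom C E l) (β : D.Hom B C h)
      (α : D.Hom A B g),
      D.comp γ (D.comp β α) = D.cast (by ring) (D.comp (D.comp γ β) α)
  id_comp : ∀ {A B : D.Obj} {g : ℤ} (α : D.Hom A B g),
      D.cast (zero_add g) (D.comp (D.id B) α) = α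
  comp_id : ∀ {A B : D.Obj} {g : ℤ} (α : D.Hom A B g),
      D.cast (add_zero g) (D.comp α (D.id A)) = α
  d_id : ∀ A : D.Obj, D.d (D.id A) = 0

/-- A morphism is closed if its differential vanishes. -/
def DGData.IsClosed (D : DGData k) {A B : D.Obj} {g : ℤ} (x : D.Hom A B g) : Prop :=
  D.d x = 0

/-- The Maurer-Cartan equation `d(p) + p ∘ p = 0` for a degree `1` endomorphism. -/
def DGData.MC (D : DGData k) {A : D.Obj} (p : D.Hom A A 1) : Prop :=
  D.d p + D.comp p p = 0

/-- A chain of `n` (in fact, infinitely many; only the first `n` are ever used)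
composable morphisms `α m : A m ⟶ A (m+1)`, where `α m` is recorded together
with its *shifted* degree `g m`, i.e. `α m` lies in degree `g m + 1`.  This
encodes an element `s α_n ⊗ ⋯ ⊗ s α_1` of `S(A n, A (n+1)) ⊗ ⋯ ⊗ S(A 0, A 1)`
(the chain is indexed so that index `0` is the first morphism `α^1`). -/
abbrev DGData.Chain (D : DGData k) (A : ℕ → D.Obj) (g : ℕ → ℤ) : Type _ :=
  ∀ m : ℕ, D.Hom (A m) (A (m + 1)) (g m + 1)

/-- Partial sums of the (shifted) degrees of a chain. -/
def psum (g : ℕ → ℤ) (n : ℕ) : ℤ := ∑ m ∈ Finset.range n, g m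

lemma psum_succ (g : ℕ → ℤ) (r : ℕ) : psum g (r + 1) = psum g r + g r :=
  Finset.sum_range_succ g r

lemma psum_one (g : ℕ → ℤ) : psum g 1 = g 0 := by simp [psum]

lemma psum_two (g : ℕ → ℤ) : psum g 2 = g 0 + g 1 := by
  simp [psum, Finset.sum_range_succ]

lemma psum_const_zero (n : ℕ) : psum (fun _ => (0 : ℤ)) n = 0 := by simp [psum]

lemma psum_shift (g : ℕ → ℤ) (t : ℕ) :
    ∀ r, psum (fun m => g (t + m)) r = psum g (t + r) - psum g t := by
  intro r
  induction r with
  | zero => simp [psum]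
  | succ r ih => rw [psum_succ, ih, Nat.add_succ, psum_succ]; ring

/-- Update of a chain in one slot (keeping the degree). -/
def DGData.upd0 (D : DGData k) {A : ℕ → D.Obj} {g : ℕ → ℤ} (α : D.Chain A g)
    (m : ℕ) (v : D.Hom (A m) (A (m + 1)) (g m + 1)) : D.Chain A g := fun t =>
  if h : t = m then (by subst h; exact v) else α t

/-- Objects of the chain obtained by replacing the `j` consecutive entries
starting at position `l` by a single entry. -/
def splObj {τ : Type u} (A : ℕ → τ) (l j : ℕ) : ℕ → τ := fun t =>
  if t ≤ l then A t else A (t + j - 1)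

/-- Degrees of the spliced chain; the new entry at position `l` has (shifted)
degree `w`. -/
def splG (g : ℕ → ℤ) (l j : ℕ) (w : ℤ) : ℕ → ℤ := fun t =>
  if t < l then g t else if t = l then w else g (t + j - 1)

lemma splObj_le {τ : Type u} (A : ℕ → τ) {l j t : ℕ} (h : t ≤ l) :
    splObj A l j t = A t := if_pos h

lemma splObj_gt {τ : Type u} (A : ℕ → τ) {l j t : ℕ} (h : ¬ t ≤ l) :
    splObj A l j t = A (t + j - 1) := if_neg h

lemma splObj_zero {τ : Type u} (A : ℕ → τ) (l j : ℕ) : splObj A l j 0 = A 0 :=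
  splObj_le A (Nat.zero_le l)

lemma splObj_last {τ : Type u} (A : ℕ → τ) {l j n : ℕ} (h1 : 1 ≤ j)
    (h2 : l + j ≤ n) : splObj A l j (n - j + 1) = A n := by
  unfold splObj
  rw [if_neg (by omega)]
  exact congrArg A (by omega)

lemma splG_lt {g : ℕ → ℤ} {l j : ℕ} {w : ℤ} {t : ℕ} (h : t < l) :
    splG g l j w t = g t := by unfold splG; rw [if_pos h]

lemma splG_eq {g : ℕ → ℤ} {l j : ℕ} {w : ℤ} {t : ℕ} (h : t = l) :
    splG g l j w t = w := by unfold splG; rw [if_neg (by omega), if_pos h]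

lemma splG_gt {g : ℕ → ℤ} {l j : ℕ} {w : ℤ} {t : ℕ} (h1 : ¬ t < l) (h2 : ¬ t = l) :
    splG g l j w t = g (t + j - 1) := by unfold splG; rw [if_neg h1, if_neg h2]

/-- The sum of the degrees of the spliced chain, when the inserted entry has
the degree of a degree `1` operation applied to the block it replaces. -/
lemma psum_splG (g : ℕ → ℤ) {l j n : ℕ} (h1 : 1 ≤ j) (h2 : l + j ≤ n) :
    psum (splG g l j (psum (fun m => g (l + m)) j + 1)) (n - j + 1) =
      psum g n + 1 := by
  have hln : l + 1 ≤ n - j + 1 := by omega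
  rw [psum, ← Finset.sum_range_add_sum_Ico _ hln]
  have e1 : (∑ t ∈ Finset.range (l + 1),
      splG g l j (psum (fun m => g (l + m)) j + 1) t)
      = psum g l + (psum (fun m => g (l + m)) j + 1) := by
    rw [Finset.sum_range_succ]
    congr 1
    · exact Finset.sum_congr rfl fun t ht => splG_lt (Finset.mem_range.mp ht)
    · exact splG_eq rfl
  have e2 : (∑ t ∈ Finset.Ico (l + 1) (n - j + 1),
      splG g l j (psum (fun m => g (l + m)) j + 1) t)
      = ∑ u ∈ Finset.Ico (l + j) n, g u := by
    rw [Finset.sum_Ico_eq_sum_range, Finset.sum_Ico_eq_sum_range]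
    have hc : n - j + 1 - (l + 1) = n - (l + j) := by omega
    rw [hc]
    refine Finset.sum_congr rfl fun i hi => ?_
    rw [splG_gt (by omega) (by omega)]
    congr 1
    omega
  have e3 : (∑ u ∈ Finset.Ico (l + j) n, g u) = psum g n - psum g (l + j) := by
    rw [psum, psum, Finset.sum_Ico_eq_sub _ (by omega : l + j ≤ n)]
  rw [e1, e2, e3, psum_shift g l j]
  ring

/-- The spliced chain: replace the `j` entries starting at position `l` by the
single entry `v`. -/
def DGData.splChain (D : DGData k) {A : ℕ → D.Obj} {g : ℕ → ℤ} (α : D.Chain A g)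
    (l j : ℕ) (hj : 1 ≤ j) {w : ℤ} (v : D.Hom (A l) (A (l + j)) (w + 1)) :
    D.Chain (splObj A l j) (splG g l j w) := fun t =>
  if h1 : t < l then
    D.hcast (splObj_le A (le_of_lt h1)).symm (splObj_le A (by omega)).symm
      (by rw [splG_lt h1]) (α t)
  else if h2 : t = l then
    D.hcast (by rw [show t = l from h2]; exact (splObj_le A le_rfl).symm)
      (by rw [show t = l from h2, splObj_gt A (show ¬ l + 1 ≤ l by omega)]
          exact congrArg A (by omega))
      (by rw [splG_eq h2]) v
  else
    D.hcast (splObj_gt A (by omega)).symm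
      (by rw [splObj_gt A (show ¬ t + 1 ≤ l by omega)]; exact congrArg A (by omega))
      (by rw [splG_gt h1 h2]) (α (t + j - 1))

end P

namespace P

variable {k : Type} [Field k]

/-- Data of chosen translations: for every object `A` and `i : ℤ` an object
`A[i] = shift A i` together with a degree `i` morphism `s A i : A[i] → A` and a
candidate inverse. -/
structure TranslationData (D : DGData k) where
  shift : D.Obj → ℤ → D.Obj
  s : ∀ (A : D.Obj) (i : ℤ), D.Hom (shift A i) A i
  sInv : ∀ (A : D.Obj) (i : ℤ), D.Hom A (shift A i) (-i)

/-- The axioms: `s A i` is a closed isomorphism of degree `i` with inverse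
`sInv A i`. -/
structure IsTranslationData (D : DGData k) (T : TranslationData D) : Prop where
  s_closed : ∀ A i, D.d (T.s A i) = 0
  sInv_closed : ∀ A i, D.d (T.sInv A i) = 0
  s_sInv : ∀ A i, D.cast (by ring) (D.comp (T.s A i) (T.sInv A i)) = D.id A
  sInv_s : ∀ A i, D.cast (by ring) (D.comp (T.sInv A i) (T.s A i)) = D.id (T.shift A i)

/-- A dg category `has translations` if it is equipped with such data
satisfying the axioms. -/
structure HasTranslations (D : DGData k) where
  T : TranslationData D
  isT : IsTranslationData D T

/-- The morphism `⟨j|α|i⟩ := sInv ∘ α ∘ s : A[i] → B[j]` between translations. -/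
def trHom (D : DGData k) (T : TranslationData D) {A B : D.Obj} {a : ℤ}
    (j : ℤ) (α : D.Hom A B a) (i : ℤ) :
    D.Hom (T.shift A i) (T.shift B j) (-j + (a + i)) :=
  D.comp (T.sInv B j) (D.comp α (T.s A i))

/-- Objects of the completion by translations: pairs `A[i]`. -/
abbrev trObj (D : DGData k) : Type _ := D.Obj × ℤ

/-- The completion by translations `A^[•]`: a morphism `A[i] → B[j]` of degree
`g` is a morphism `α : A → B` of `A` (of degree `g + j - i`), written
`⟨j|α|i⟩`; degrees, differential, composition and identities are given by the
formulas of Lemma `formulas_translations` of the paper. -/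
def trData (D : DGData k) : DGData k where
  Obj := trObj D
  Hom A B g := D.Hom A.1 B.1 (g - A.2 + B.2)
  homAdd _ _ _ := inferInstance
  homMod _ _ _ := inferInstance
  d := fun {A B g} x => ((-1 : k) ^ B.2) • D.cast (by ring) (D.d x)
  comp := fun {A B C g h} y x => D.cast (by ring) (D.comp y x)
  id A := D.cast (by ring) (D.id A.1)

/-- The canonical translations on the completion by translations:
`A[i][j] := A[i+j]` with structural isomorphism `⟨i| id_A |i+j⟩`. -/
def trTrans (D : DGData k) : TranslationData (trData D) where
  shift X j := (X.1, X.2 + j)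
  s X j := D.cast (by ring) (D.id X.1)
  sInv X j := D.cast (by ring) (D.id X.1)

end P

namespace P

variable {k : Type} [Field k]

/-! ## A∞-functors between dg categories

Dg categories are regarded as A∞-categories via `b₁(sα) := -s(dα)`,
`b₂(sα ⊗ sβ) := (-1)^{|α|} s(α ∘ β)`, `b_n := 0` for `n ≥ 3` (Construction
`dg_to_Ainf` of the paper), using Fukaya's sign convention.  We encode an
element `s α_n ⊗ ⋯ ⊗ s α_1` of `S(A n, A (n+1)) ⊗ ⋯ ⊗ S(A 0, A 1)` as a
`DGData.Chain`, recording each `α m` together with its *shifted* degree `g m`.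
An A∞-functor is then given by a map on objects together with, for every `n`,
a degree-0 component `f_n` sending such a chain to an element of
`S(f A 0, f A n)`, i.e. a morphism of degree `psum g n + 1`. -/

/-- The data of an A∞-functor between dg categories: its action on objects and
its components `f_n`, `n ≥ 1` (the value on chains of length `n` only depends
on the first `n` entries of the chain; this is part of `IsAInfFun` below). -/
structure AInfFunData (D E : DGData k) where
  obj : D.Obj → E.Obj
  f : ∀ (n : ℕ) (A : ℕ → D.Obj) (g : ℕ → ℤ), D.Chain A g →
    E.Hom (obj (A 0)) (obj (A n)) (psum g n + 1)

/-- The value of `b_j` (for the A∞-structure of a dg category) on the block of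
`j` consecutive entries of the chain `α` starting at position `l`:
`b₁(sα) = -s(dα)`, `b₂(sα ⊗ sβ) = (-1)^{|α|} s(α ∘ β)`, and `b_j = 0`
otherwise. -/
def DGData.blockVal (D : DGData k) {A : ℕ → D.Obj} {g : ℕ → ℤ}
    (α : D.Chain A g) (l : ℕ) :
    (j : ℕ) → D.Hom (A l) (A (l + j)) ((psum (fun m => g (l + m)) j + 1) + 1)
  | 1 => D.cast (by simp [psum_one]) (- D.d (α l))
  | 2 => ((-1 : k) ^ (g (l + 1) + 1)) •
      D.cast (by simp only [psum_two, Nat.add_zero]; ring)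
        (D.comp (α (l + 1)) (α l))
  | 0 => 0
  | (_ + 3) => 0

/-- The left hand side of the `n`-th defining equation of an A∞-functor
between dg categories (Equation (main) of the paper): the sum of the terms
`f_{i+1+l} ∘ (1^{⊗i} ⊗ b_j ⊗ 1^{⊗l})`, `j ∈ {1,2}`, with the signs coming from
Fukaya's convention. -/
def eqLhs {D E : DGData k} (F : AInfFunData D E) (n : ℕ) (A : ℕ → D.Obj)
    (g : ℕ → ℤ) (α : D.Chain A g) :
    E.Hom (F.obj (A 0)) (F.obj (A n)) ((psum g n + 1) + 1) :=
  ∑ x ∈ Finset.range n ×ˢ Finset.range 3,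
    if h : 1 ≤ x.2 ∧ x.1 + x.2 ≤ n then
      ((-1 : k) ^ (psum g n - psum g (x.1 + x.2))) •
        E.hcast (congrArg F.obj (splObj_zero A x.1 x.2))
          (congrArg F.obj (splObj_last A h.1 h.2))
          (by rw [psum_splG g h.1 h.2])
          (F.f (n - x.2 + 1) (splObj A x.1 x.2)
            (splG g x.1 x.2 (psum (fun m => g (x.1 + m)) x.2 + 1))
            (D.splChain α x.1 x.2 h.1 (D.blockVal α x.1 x.2)))
    else 0

/-- The right hand side of the `n`-th defining equation of an A∞-functor
between dg categories: `∑_{t=1}^{n-1} b₂ ∘ (f_{n-t} ⊗ f_t) + b₁ ∘ f_n`. -/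
def eqRhs {D E : DGData k} (F : AInfFunData D E) (n : ℕ) (A : ℕ → D.Obj)
    (g : ℕ → ℤ) (α : D.Chain A g) :
    E.Hom (F.obj (A 0)) (F.obj (A n)) ((psum g n + 1) + 1) :=
  (∑ t ∈ Finset.range n,
    if h : 1 ≤ t ∧ t < n then
      ((-1 : k) ^ (psum g n - psum g t + 1)) •
        E.hcast rfl (congrArg F.obj (congrArg A (by omega : t + (n - t) = n)))
          (by rw [psum_shift g t (n - t), show t + (n - t) = n from by omega]; ring)
          (E.comp
            (F.f (n - t) (fun m => A (t + m)) (fun m => g (t + m)) (fun m => α (t + m)))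
            (F.f t A g α))
    else 0) +
  (- (E.d (F.f n A g α)))

/-- The axioms for `F` to be an A∞-functor (with strict units) between dg
categories: the components `f_n` only depend on the first `n` entries of a
chain, they are `k`-multilinear, they strictly respect strict units, and they
satisfy the defining equations of an A∞-functor. -/
structure IsAInfFun {D E : DGData k} (F : AInfFunData D E) : Prop where
  ext : ∀ (n : ℕ) (A A' : ℕ → D.Obj) (g g' : ℕ → ℤ)
      (α : D.Chain A g) (α' : D.Chain A' g'),
      (∀ m, m ≤ n → A m = A' m) → (∀ m, m < n → g m = g' m) →
      (∀ m, m < n → HEq (α m) (α' m)) → HEq (F.f n A g α) (F.f n A' g' α')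
  map_add : ∀ (n : ℕ) (A : ℕ → D.Obj) (g : ℕ → ℤ) (α : D.Chain A g) (m : ℕ),
      m < n → ∀ u v : D.Hom (A m) (A (m + 1)) (g m + 1),
      F.f n A g (D.upd0 α m (u + v)) =
        F.f n A g (D.upd0 α m u) + F.f n A g (D.upd0 α m v)
  map_smul : ∀ (n : ℕ) (A : ℕ → D.Obj) (g : ℕ → ℤ) (α : D.Chain A g) (m : ℕ),
      m < n → ∀ (c : k) (u : D.Hom (A m) (A (m + 1)) (g m + 1)),
      F.f n A g (D.upd0 α m (c • u)) = c • F.f n A g (D.upd0 α m u)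
  unit_one : ∀ A₀ : D.Obj,
      F.f 1 (fun _ => A₀) (fun _ => (-1 : ℤ))
          (fun _ => D.cast (by norm_num) (D.id A₀)) =
        E.cast (by norm_num [psum]) (E.id (F.obj A₀))
  unit_vanish : ∀ (n : ℕ) (A : ℕ → D.Obj) (g : ℕ → ℤ) (α : D.Chain A g) (m : ℕ),
      2 ≤ n → m < n → A (m + 1) = A m → g m = -1 →
      HEq (α m) (D.id (A m)) → F.f n A g α = 0
  eqn : ∀ n, 1 ≤ n → ∀ (A : ℕ → D.Obj) (g : ℕ → ℤ) (α : D.Chain A g),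
      eqLhs F n A g α = eqRhs F n A g α

/-- The functor induced on homotopy categories sends (the class of) a closed
degree-0 morphism `φ` to (the class of) `s⁻¹ (f₁ (s φ))`.  We record the
underlying assignment, used to express `H⁰(F)`. -/
def AInfFunData.h0map {D E : DGData k} (F : AInfFunData D E) {A B : D.Obj}
    (φ : D.Hom A B 0) : E.Hom (F.obj A) (F.obj B) 0 :=
  E.hcast (congrArg F.obj rfl) (congrArg F.obj rfl) (by norm_num [psum])
    (F.f 1 (fun m => if m = 0 then A else B) (fun _ => (-1 : ℤ))
      (fun m => Nat.rec (motive := fun m =>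
          D.Hom ((fun m => if m = 0 then A else B) m)
            ((fun m => if m = 0 then A else B) (m + 1)) (-1 + 1))
        (D.cast (by norm_num) φ) (fun _ _ => 0) m))

end P

namespace P

variable {k : Type} [Field k]

lemma psum_tr (g i : ℕ → ℤ) : ∀ n,
    psum (fun m => g m - i m + i (m + 1)) n = psum g n - i 0 + i n := by
  intro n
  induction n with
  | zero => simp [psum]
  | succ n ih => rw [psum_succ, ih, psum_succ]; ring

/-- Construction `lift_to_translations` of the paper: the lift of an
A∞-functor `f : A_∞ → B_∞` to an A∞-functor `(A^[•])_∞ → B_∞`, where `B` is a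
dg category with translations.  On objects, `A[i] ↦ f(A)[i]`, and
`F_n( s⟨i_{n+1}|α^n|i_n⟩, …, s⟨i₂|α^1|i₁⟩ )
  = ⟨i_{n+1}| f_n(sα^n, …, sα^1) |i₁⟩ ⬝ (-1)^{i₁+⋯+i_{n+1}}`. -/
def liftTr {D E : DGData k} (F : AInfFunData D E) (T : TranslationData E) :
    AInfFunData (trData D) E where
  obj X := T.shift (F.obj X.1) X.2
  f n 𝔸 g α :=
    ((-1 : k) ^ (∑ m ∈ Finset.range (n + 1), (𝔸 m).2)) •
      E.cast (by rw [psum_tr g (fun m => (𝔸 m).2) n]; ring)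
        (E.comp (T.sInv (F.obj ((𝔸 n).1)) ((𝔸 n).2))
          (E.comp
            (F.f n (fun m => (𝔸 m).1)
              (fun m => g m - (𝔸 m).2 + (𝔸 (m + 1)).2)
              (fun m => D.cast (by ring) (α m)))
            (T.s (F.obj ((𝔸 0).1)) ((𝔸 0).2))))

end P

namespace P

section Aux

variable {k : Type} [Field k]

lemma cast_heq' (D : DGData k) {A B : D.Obj} {i i' : ℤ} (h : i = i')
    (x : D.Hom A B i) : HEq (D.cast h x) x := by subst h; rfl

lemma hcast_heq' (D : DGData k) {A A' B B' : D.Obj} {i i' : ℤ}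
    (hA : A = A') (hB : B = B') (hi : i = i') (x : D.Hom A B i) :
    HEq (D.hcast hA hB hi x) x := by subst hA; subst hB; subst hi; rfl

lemma comp_heq' (D : DGData k) {A A' B B' C C' : D.Obj} {g g' h h' : ℤ}
    (hA : A = A') (hB : B = B') (hC : C = C') (hg : g = g') (hh : h = h')
    {y : D.Hom B C h} {y' : D.Hom B' C' h'} {x : D.Hom A B g} {x' : D.Hom A' B' g'}
    (hy : HEq y y') (hx : HEq x x') : HEq (D.comp y x) (D.comp y' x') := by
  subst hA; subst hB; subst hC; subst hg; subst hh
  cases hy; cases hx; rfl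

lemma smul_heq' (D : DGData k) {A A' B B' : D.Obj} {g g' : ℤ}
    (hA : A = A') (hB : B = B') (hg : g = g') (c : k)
    {x : D.Hom A B g} {x' : D.Hom A' B' g'}
    (hx : HEq x x') : HEq (c • x) (c • x') := by
  subst hA; subst hB; subst hg
  cases hx; rfl

lemma neg_heq' (D : DGData k) {A A' B B' : D.Obj} {g g' : ℤ}
    (hA : A = A') (hB : B = B') (hg : g = g')
    {x : D.Hom A B g} {x' : D.Hom A' B' g'}
    (hx : HEq x x') : HEq (-x) (-x') := by
  subst hA; subst hB; subst hg
  cases hx; rfl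

lemma d_heq' (D : DGData k) {A A' B B' : D.Obj} {g g' : ℤ}
    (hA : A = A') (hB : B = B') (hg : g = g')
    {x : D.Hom A B g} {x' : D.Hom A' B' g'}
    (hx : HEq x x') : HEq (D.d x) (D.d x') := by
  subst hA; subst hB; subst hg
  cases hx; rfl

lemma cast_add' (D : DGData k) {A B : D.Obj} {i i' : ℤ} (h : i = i')
    (x y : D.Hom A B i) : D.cast h (x + y) = D.cast h x + D.cast h y := by
  subst h; rfl

lemma cast_smul' (D : DGData k) {A B : D.Obj} {i i' : ℤ} (h : i = i') (c : k)
    (x : D.Hom A B i) : D.cast h (c • x) = c • D.cast h x := by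
  subst h; rfl

lemma hcast_smul' (D : DGData k) {A A' B B' : D.Obj} {i i' : ℤ}
    (hA : A = A') (hB : B = B') (hi : i = i') (c : k) (x : D.Hom A B i) :
    D.hcast hA hB hi (c • x) = c • D.hcast hA hB hi x := by
  subst hA; subst hB; subst hi; rfl

lemma cast_zero' (D : DGData k) {A B : D.Obj} {i i' : ℤ} (h : i = i') :
    D.cast h (0 : D.Hom A B i) = 0 := by
  subst h; rfl

lemma comp_zero_left' {D : DGData k} (hD : IsDGCat D) {A B C : D.Obj} {g h : ℤ}
    (α : D.Hom A B g) : D.comp (0 : D.Hom B C h) α = 0 := by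
  have := hD.comp_smul_left (0 : k) (0 : D.Hom B C h) α
  simpa using this

lemma comp_zero_right' {D : DGData k} (hD : IsDGCat D) {A B C : D.Obj} {g h : ℤ}
    (β : D.Hom B C h) : D.comp β (0 : D.Hom A B g) = 0 := by
  have := hD.comp_smul_right (0 : k) β (0 : D.Hom A B g)
  simpa using this

lemma assoc_heq' {D : DGData k} (hD : IsDGCat D) {A B C E : D.Obj} {g h l : ℤ}
    (γ : D.Hom C E l) (β : D.Hom B C h) (α : D.Hom A B g) :
    HEq (D.comp γ (D.comp β α)) (D.comp (D.comp γ β) α) := by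
  rw [hD.assoc]; exact cast_heq' _ _ _

lemma sgn_congr {a b : ℤ} (h : Even (a - b)) : ((-1 : k) ^ a) = (-1 : k) ^ b := by
  have : a = (a - b) + b := by ring
  rw [this, zpow_add₀ (by simp), h.neg_one_zpow, one_mul]

lemma sgn_add (a b : ℤ) : ((-1 : k) ^ (a + b)) = (-1 : k) ^ a * (-1 : k) ^ b :=
  zpow_add₀ (by simp) _ _

/-- Conjugation by the structural isomorphisms. -/
def Phi (E : DGData k) (T : TranslationData E) {X Y : E.Obj} {a : ℤ} (i j b : ℤ)
    (h : -j + (a + i) = b) (x : E.Hom X Y a) : E.Hom (T.shift X i) (T.shift Y j) b :=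
  E.cast h (E.comp (T.sInv Y j) (E.comp x (T.s X i)))

def PhiL {E : DGData k} (hE : IsDGCat E) (T : TranslationData E) {X Y : E.Obj} {a : ℤ}
    (i j b : ℤ) (h : -j + (a + i) = b) :
    E.Hom X Y a →ₗ[k] E.Hom (T.shift X i) (T.shift Y j) b where
  toFun := Phi E T i j b h
  map_add' x y := by
    simp only [Phi, hE.comp_add_left, hE.comp_add_right, cast_add']
  map_smul' c x := by
    simp only [Phi, hE.comp_smul_left, hE.comp_smul_right, cast_smul', RingHom.id_apply]

lemma Phi_heq (E : DGData k) (T : TranslationData E) {X Y X' Y' : E.Obj} {a a' : ℤ}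
    {i j b i' j' b' : ℤ} {h : -j + (a + i) = b} {h' : -j' + (a' + i') = b'}
    (hX : X = X') (hY : Y = Y') (hi : i = i') (hj : j = j') (ha : a = a')
    {x : E.Hom X Y a} {x' : E.Hom X' Y' a'} (hx : HEq x x') :
    HEq (Phi E T i j b h x) (Phi E T i' j' b' h' x') := by
  subst hX; subst hY; subst hi; subst hj; subst ha; subst h; subst h'
  cases hx; rfl

lemma Phi_d {E : DGData k} (hE : IsDGCat E) {T : TranslationData E}
    (hT : IsTranslationData E T) {X Y : E.Obj} {a : ℤ}
    (i j b : ℤ) (h : -j + (a + i) = b) (h' : -j + (a + 1 + i) = b + 1)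
    (x : E.Hom X Y a) :
    E.d (Phi E T i j b h x) = ((-1 : k) ^ j) • Phi E T i j (b + 1) h' (E.d x) := by
  subst h
  have e1 : E.d (E.comp x (T.s X i)) = E.cast (by ring) (E.comp (E.d x) (T.s X i)) := by
    rw [hE.leibniz, hT.s_closed, comp_zero_right' hE, cast_zero', smul_zero, add_zero]
  show E.d (E.comp (T.sInv Y j) (E.comp x (T.s X i))) = _
  rw [hE.leibniz, hT.sInv_closed, comp_zero_left' hE, cast_zero', zero_add, e1,
    sgn_congr (k := k) (a := -j) (b := j) ⟨-j, by ring⟩]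
  congr 1
  apply eq_of_heq
  refine (cast_heq' _ _ _).trans (HEq.trans ?_ (cast_heq' _ _ _).symm)
  exact comp_heq' E rfl rfl rfl (by ring) rfl HEq.rfl (cast_heq' _ _ _)

lemma Phi_comp {E : DGData k} (hE : IsDGCat E) {T : TranslationData E}
    (hT : IsTranslationData E T) {X Y Z : E.Obj} {a b : ℤ}
    {i j l p q r : ℤ} (hp : -j + (a + i) = p) (hq : -l + (b + j) = q)
    (hr : -l + (b + a + i) = r) (x : E.Hom X Y a) (y : E.Hom Y Z b) :
    HEq (E.comp (Phi E T j l q hq y) (Phi E T i j p hp x))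
      (Phi E T i l r hr (E.comp y x)) := by
  subst hp; subst hq; subst hr
  show HEq (E.comp (E.comp (T.sInv Z l) (E.comp y (T.s Y j)))
      (E.comp (T.sInv Y j) (E.comp x (T.s X i))))
    (E.comp (T.sInv Z l) (E.comp (E.comp y x) (T.s X i)))
  refine (assoc_heq' hE _ _ _).symm.trans ?_
  refine comp_heq' E rfl rfl rfl (by ring) rfl HEq.rfl ?_
  refine (assoc_heq' hE _ _ _).symm.trans ?_
  refine HEq.trans ?_ (assoc_heq' hE _ _ _)
  refine comp_heq' E rfl rfl rfl (by ring) rfl HEq.rfl ?_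
  refine (assoc_heq' hE _ _ _).trans ?_
  refine (comp_heq' E rfl rfl rfl rfl (by ring : j + -j = 0)
    (y' := E.id Y) ?_ HEq.rfl).trans ?_
  · rw [← hT.s_sInv Y j]; exact (cast_heq' _ _ _).symm
  · have := hE.id_comp (E.comp x (T.s X i))
    exact (cast_heq' E (zero_add _) _).symm.trans (heq_of_eq this)

lemma Phi_id {E : DGData k} (hE : IsDGCat E) {T : TranslationData E}
    (hT : IsTranslationData E T) {X : E.Obj} {i b : ℤ} (h : -i + (0 + i) = b) :
    HEq (Phi E T i i b h (E.id X)) (E.id (T.shift X i)) := by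
  refine (cast_heq' _ _ _).trans ?_
  refine (comp_heq' E rfl rfl rfl (by ring : 0 + i = i) rfl HEq.rfl
    (x' := T.s X i) ?_).trans ?_
  · exact (cast_heq' E (zero_add _) _).symm.trans (heq_of_eq (hE.id_comp _))
  · rw [← hT.sInv_s X i]; exact (cast_heq' _ _ _).symm

/-- Underlying chain. -/
def dn {D : DGData k} {A : ℕ → (trData D).Obj} {g : ℕ → ℤ} (α : (trData D).Chain A g) :
    D.Chain (fun m => (A m).1) (fun m => g m - (A m).2 + (A (m + 1)).2) :=
  fun m => D.cast (by ring) (α m : D.Hom (A m).1 (A (m+1)).1 (g m + 1 - (A m).2 + (A (m+1)).2))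

lemma lift_eq {D E : DGData k} (F : AInfFunData D E) (T : TranslationData E)
    (n : ℕ) (A : ℕ → (trData D).Obj) (g : ℕ → ℤ) (α : (trData D).Chain A g) :
    (liftTr F T).f n A g α = ((-1 : k) ^ (∑ m ∈ Finset.range (n + 1), (A m).2)) •
      Phi E T (A 0).2 (A n).2 (psum g n + 1)
        (by rw [psum_tr g (fun m => (A m).2) n]; ring)
        (F.f n (fun m => (A m).1) (fun m => g m - (A m).2 + (A (m + 1)).2) (dn α)) := rfl

lemma dn_heq {D : DGData k} {A : ℕ → (trData D).Obj} {g : ℕ → ℤ}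
    (α : (trData D).Chain A g) (m : ℕ) : HEq (dn α m) (α m) := cast_heq' _ _ _

lemma dn_upd0 {D : DGData k} {A : ℕ → (trData D).Obj} {g : ℕ → ℤ}
    (α : (trData D).Chain A g) (m : ℕ) (u : (trData D).Hom (A m) (A (m + 1)) (g m + 1)) :
    dn ((trData D).upd0 α m u) = D.upd0 (dn α) m (D.cast (by ring)
      (u : D.Hom (A m).1 (A (m+1)).1 (g m + 1 - (A m).2 + (A (m+1)).2))) := by
  funext t
  by_cases h : t = m
  · subst h; simp [dn, DGData.upd0]
  · simp [dn, DGData.upd0, h]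

lemma spl_smul {D E : DGData k} {F : AInfFunData D E} (hF : IsAInfFun F)
    {A : ℕ → D.Obj} {g : ℕ → ℤ} (α : D.Chain A g)
    (l j : ℕ) (hj : 1 ≤ j) {w : ℤ} (c : k) (v : D.Hom (A l) (A (l + j)) (w + 1))
    (n : ℕ) (hn : l < n) :
    F.f n _ _ (D.splChain α l j hj (c • v)) = c • F.f n _ _ (D.splChain α l j hj v) := by
  have e1 : ∀ v : D.Hom (A l) (A (l + j)) (w + 1), D.splChain α l j hj v =
      D.upd0 (D.splChain α l j hj 0) l (D.splChain α l j hj v l) := by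
    intro v
    funext t
    by_cases h : t = l
    · subst h; simp [DGData.upd0]
    · simp [DGData.upd0, h, DGData.splChain]
  have e2 : D.splChain α l j hj (c • v) l = c • D.splChain α l j hj v l := by
    simp [DGData.splChain, hcast_smul']
  rw [e1 (c • v), e2, hF.map_smul _ _ _ _ _ hn, ← e1]

lemma cast_irrel {D : DGData k} {A B : D.Obj} {i j l : ℤ} (h : i = l) (h' : j = l)
    {x : D.Hom A B i} {y : D.Hom A B j} (hx : HEq x y) : D.cast h x = D.cast h' y :=
  eq_of_heq ((cast_heq' _ _ _).trans (hx.trans (cast_heq' _ _ _).symm))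

/-- The sign comparing block values. -/
def bsgn (i : ℕ → ℤ) (l j : ℕ) : ℤ := if j = 1 then i (l + 1) else i (l + 1) + i (l + 2)

lemma blockVal_heq {D : DGData k} {A : ℕ → (trData D).Obj} {g : ℕ → ℤ}
    (α : (trData D).Chain A g) (l j : ℕ) (hj : j = 1 ∨ j = 2) :
    HEq ((trData D).blockVal α l j)
      (((-1 : k) ^ bsgn (fun m => (A m).2) l j) • D.blockVal (dn α) l j) := by
  rcases hj with rfl | rfl
  · refine (cast_heq' (trData D) _ _).trans ?_
    have e : ((-1 : k) ^ bsgn (fun m => (A m).2) l 1) • D.blockVal (dn α) l 1 =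
      ((-1 : k) ^ (A (l + 1)).2) • D.cast (by simp [psum_one]) (- D.d (dn α l)) := rfl
    rw [e]
    have e2 : (-((trData D).d (α l))) = ((-1 : k) ^ (A (l + 1)).2) •
        (-(D.cast (by ring) (D.d (i := g l + 1 - (A l).2 + (A (l+1)).2) (α l)) :
          D.Hom (A l).1 (A (l+1)).1 (g l + 1 + 1 - (A l).2 + (A (l + 1)).2))) := by
      rw [smul_neg]; rfl
    rw [e2]
    refine smul_heq' D rfl rfl (by simp [psum_one]; ring) _ ?_
    refine HEq.trans ?_ (cast_heq' _ _ _).symm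
    refine neg_heq' D rfl rfl (by ring) ?_
    refine (cast_heq' _ _ _).trans ?_
    exact d_heq' D rfl rfl (by ring) (dn_heq α l).symm
  · have e : ((-1 : k) ^ bsgn (fun m => (A m).2) l 2) • D.blockVal (dn α) l 2 =
      ((-1 : k) ^ ((A (l + 1)).2 + (A (l + 2)).2)) •
        (((-1 : k) ^ (g (l + 1) - (A (l + 1)).2 + (A (l + 2)).2 + 1)) •
        D.cast (by simp only [psum_two, Nat.add_zero]; ring)
          (D.comp (dn α (l + 1)) (dn α l))) := rfl
    rw [e, smul_smul, ← sgn_add, sgn_congr (k := k)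
      (b := g (l + 1) + 1) ⟨(A (l + 2)).2, by ring⟩]
    refine smul_heq' D (A := (A l).1) (B := (A (l+2)).1) rfl rfl
      (by simp only [psum_two, Nat.add_zero]; ring) _ ?_
    refine (cast_heq' (trData D) _ _).trans ?_
    refine (cast_heq' D _ _).trans ?_
    refine HEq.trans ?_ (cast_heq' _ _ _).symm
    exact comp_heq' D rfl rfl rfl (by ring) (by ring) (dn_heq α _).symm (dn_heq α _).symm

lemma splObj_fst {τ : Type*} (A : ℕ → τ × ℤ) (l j t : ℕ) :
    (splObj A l j t).1 = splObj (fun m => (A m).1) l j t := by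
  unfold splObj; split_ifs <;> rfl

lemma splObj_snd {τ : Type*} (A : ℕ → τ × ℤ) (l j t : ℕ) :
    (splObj A l j t).2 = splObj (fun m => (A m).2) l j t := by
  unfold splObj; split_ifs <;> rfl

lemma splG_tr (i g : ℕ → ℤ) (l j : ℕ) (hj : 1 ≤ j) (w w' : ℤ)
    (hw : w' = w - i l + i (l + j)) (t : ℕ) :
    splG g l j w t - splObj i l j t + splObj i l j (t + 1) =
      splG (fun m => g m - i m + i (m + 1)) l j w' t := by
  rcases lt_trichotomy t l with h | h | h
  · rw [splG_lt h, splG_lt h, splObj_le _ (by omega), splObj_le _ (by omega)]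
  · rw [splG_eq h, splG_eq h, splObj_le _ (by omega), splObj_gt _ (by omega), hw]
    rw [h, show l + 1 + j - 1 = l + j by omega]
  · rw [splG_gt (by omega) (by omega), splG_gt (by omega) (by omega),
      splObj_gt _ (by omega), splObj_gt _ (by omega),
      show t + 1 + j - 1 = t + j - 1 + 1 by omega]

lemma splChain_heq {D : DGData k} {A : ℕ → (trData D).Obj} {g : ℕ → ℤ}
    (α : (trData D).Chain A g) (l j : ℕ) (hj : 1 ≤ j) {w w' : ℤ}
    (v : (trData D).Hom (A l) (A (l + j)) (w + 1))
    (v' : D.Hom (A l).1 (A (l + j)).1 (w' + 1)) (hv : HEq v v') (t : ℕ) :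
    HEq (dn ((trData D).splChain α l j hj v) t) (D.splChain (dn α) l j hj v' t) := by
  refine (dn_heq _ _).trans ?_
  unfold DGData.splChain
  split_ifs with h1 h2
  · exact (hcast_heq' (trData D) _ _ _ _).trans
      ((dn_heq α _).symm.trans (hcast_heq' D _ _ _ _).symm)
  · exact (hcast_heq' (trData D) _ _ _ _).trans
      (hv.trans (hcast_heq' D _ _ _ _).symm)
  · exact (hcast_heq' (trData D) _ _ _ _).trans
      ((dn_heq α _).symm.trans (hcast_heq' D _ _ _ _).symm)

lemma sum_spl_two (i : ℕ → ℤ) (l d : ℕ) :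
    ∑ m ∈ Finset.range (l + 1 + d), splObj i l 2 m + i (l + 1) =
      ∑ m ∈ Finset.range (l + 2 + d), i m := by
  induction d with
  | zero =>
    rw [Nat.add_zero, Nat.add_zero, Finset.sum_range_succ _ (l + 1)]
    congr 1
    refine Finset.sum_congr rfl fun m hm => ?_
    rw [splObj_le]
    have := Finset.mem_range.mp hm
    omega
  | succ d ih =>
    rw [← Nat.add_assoc, ← Nat.add_assoc, Finset.sum_range_succ, Finset.sum_range_succ, ← ih,
      splObj_gt _ (by omega), show l + 1 + d + 2 - 1 = l + 2 + d by omega]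
    ring

lemma sum_spl (i : ℕ → ℤ) (l j n : ℕ) (hj : j = 1 ∨ j = 2) (h : l + j ≤ n) :
    Even (∑ m ∈ Finset.range (n - j + 1 + 1), splObj i l j m + bsgn i l j
      - (∑ m ∈ Finset.range (n + 1), i m) - i (l + j)) := by
  rcases hj with rfl | rfl
  · have e : ∀ m, splObj i l 1 m = i m := by
      intro m; unfold splObj; split_ifs <;> simp
    simp only [e, bsgn, if_true, show n - 1 + 1 + 1 = n + 1 by omega]
    simp
  · obtain ⟨d, rfl⟩ := Nat.exists_eq_add_of_le h
    rw [show l + 2 + d + 1 = l + 2 + (d + 1) by omega, ← sum_spl_two,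
      show l + 2 + d - 2 + 1 + 1 = l + 1 + (d + 1) by omega]
    simp [bsgn]

lemma gen_lhs {E : DGData k} (hE : IsDGCat E) (T : TranslationData E)
    {X Y X' Y' : E.Obj} {a a' i j b i' j' b' : ℤ} {h : -j + (a + i) = b}
    {h' : -j' + (a' + i') = b'}
    (X₀ Y₀ : E.Obj) (a₀ : ℤ)
    (hX : X = X') (hY : Y = Y') (hi : i = i') (hj : j = j') (ha : a = a')
    (hX₀ : X = X₀) (hY₀ : Y = Y₀) (ha₀ : a = a₀)
    {x : E.Hom X Y a} {x₀ : E.Hom X₀ Y₀ a₀} (ε : k) (hx : HEq x (ε • x₀))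
    (e1 : T.shift X i = T.shift X' i') (e2 : T.shift Y j = T.shift Y' j') (e3 : b = b')
    (e4 : X₀ = X') (e5 : Y₀ = Y') (e6 : a₀ = a')
    (c1 c2 c3 c4 : k) (hc : c1 * c2 * ε = c3 * c4) :
    c1 • E.hcast e1 e2 e3 (c2 • Phi E T i j b h x) =
      c3 • PhiL hE T i' j' b' h' (c4 • E.hcast e4 e5 e6 x₀) := by
  subst hX hY hi hj ha hX₀ hY₀ ha₀ e3
  cases hx
  have e : Phi E T i j b h (ε • x₀) = ε • PhiL hE T i j b h x₀ := (PhiL hE T i j b h).map_smul ε x₀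
  rw [map_smul]
  show c1 • (c2 • Phi E T i j b h (ε • x₀)) = c3 • c4 • PhiL hE T i j b h x₀
  rw [e, smul_smul, smul_smul, smul_smul, hc]

lemma gen_rhs {E : DGData k} (hE : IsDGCat E) {T : TranslationData E}
    (hT : IsTranslationData E T)
    {X Y Z Z' : E.Obj} {a a' b i j l l' p q r : ℤ} {hp : -j + (a + i) = p}
    {hq : -l + (b + j) = q} {h' : -l' + (a' + i) = r}
    (hZ : Z = Z') (hl : l = l')
    (x : E.Hom X Y a) (y : E.Hom Y Z b)
    (e1 : T.shift X i = T.shift X i) (e2 : T.shift Z l = T.shift Z' l') (e3 : q + p = r)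
    (e4 : X = X) (e5 : Z = Z') (e6 : b + a = a')
    (c1 c2 c3 c4 c5 : k) (hc : c1 * (c2 * c3) = c4 * c5) :
    c1 • E.hcast e1 e2 e3 (E.comp (c2 • Phi E T j l q hq y) (c3 • Phi E T i j p hp x)) =
      c4 • PhiL hE T i l' r h' (c5 • E.hcast e4 e5 e6 (E.comp y x)) := by
  subst hZ hl e3 e6
  rw [map_smul, hE.comp_smul_left, hE.comp_smul_right]
  have e : E.comp (Phi E T j l q hq y) (Phi E T i j p hp x) =
    PhiL hE T i l (q + p) h' (E.comp y x) := eq_of_heq (Phi_comp hE hT hp hq h' x y)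
  rw [e]
  show c1 • c2 • c3 • _ = c4 • c5 • PhiL hE T i l (q + p) h' (E.comp y x)
  rw [smul_smul, smul_smul, smul_smul, mul_assoc, hc]

lemma gen_d {E : DGData k} (hE : IsDGCat E) {T : TranslationData E}
    (hT : IsTranslationData E T) {X Y : E.Obj} {a i j b : ℤ} {h : -j + (a + i) = b}
    {h' : -j + (a + 1 + i) = b + 1} (x : E.Hom X Y a) (c c' : k) (hc : c * (-1) ^ j = c') :
    -E.d (c • Phi E T i j b h x) = c' • PhiL hE T i j (b + 1) h' (-E.d x) := by
  rw [hE.d_smul, Phi_d hE hT _ _ _ _ h', map_neg, smul_neg, smul_smul, hc]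
  rfl

lemma gen_zero {E : DGData k} (hE : IsDGCat E) (T : TranslationData E)
    {X Y : E.Obj} {a i j b : ℤ} {h : -j + (a + i) = b}
    (x : E.Hom X Y a) (c : k) (hx : x = 0) : c • Phi E T i j b h x = 0 := by
  subst hx
  have : Phi E T i j b h (0 : E.Hom X Y a) = 0 := (PhiL hE T i j b h).map_zero
  rw [this, smul_zero]

lemma gen_smul {E : DGData k} (hE : IsDGCat E) (T : TranslationData E)
    {X Y : E.Obj} {a i j b : ℤ} {h : -j + (a + i) = b}
    (x y : E.Hom X Y a) (c c' : k) (hx : x = c' • y) :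
    c • Phi E T i j b h x = c' • c • Phi E T i j b h y := by
  subst hx
  have : Phi E T i j b h (c' • y) = c' • Phi E T i j b h y := (PhiL hE T i j b h).map_smul c' y
  rw [this, smul_comm]

lemma lhs_term {D E : DGData k} (hE : IsDGCat E) (T : TranslationData E)
    {F : AInfFunData D E} (hF : IsAInfFun F)
    (n : ℕ) (A : ℕ → (trData D).Obj) (g : ℕ → ℤ) (α : (trData D).Chain A g)
    (hb : -(A n).2 + (psum (fun m => g m - (A m).2 + (A (m + 1)).2) n + 1 + 1 + (A 0).2)
      = psum g n + 1 + 1) :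
    eqLhs (liftTr F T) n A g α =
      ((-1 : k) ^ (∑ m ∈ Finset.range (n + 1), (A m).2 + (A n).2)) •
      PhiL hE T (A 0).2 (A n).2 (psum g n + 1 + 1) hb
        (eqLhs F n (fun m => (A m).1) (fun m => g m - (A m).2 + (A (m + 1)).2) (dn α)) := by
  unfold eqLhs
  rw [map_sum, Finset.smul_sum]
  refine Finset.sum_congr rfl fun x hx => ?_
  obtain ⟨l, j⟩ := x
  dsimp only
  split_ifs with h
  swap
  · rw [map_zero, smul_zero]; rfl
  have hj : j = 1 ∨ j = 2 := by
    have := (Finset.mem_range.mp (Finset.mem_product.mp hx).2)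
    dsimp only at this
    omega
  have hw : psum (fun m => g (l + m) - (A (l + m)).2 + (A (l + m + 1)).2) j + 1 =
      psum (fun m => g (l + m)) j + 1 - (A l).2 + (A (l + j)).2 := by
    have := psum_tr (fun m => g (l + m)) (fun m => (A (l + m)).2) j
    simp only [← Nat.add_assoc] at this
    rw [this, Nat.add_zero]; ring
  have hG : ∀ t, splG g l j (psum (fun m => g (l + m)) j + 1) t - (splObj A l j t).2 +
      (splObj A l j (t + 1)).2 =
      splG (fun m => g m - (A m).2 + (A (m + 1)).2) l j
        (psum (fun m => g (l + m) - (A (l + m)).2 + (A (l + m + 1)).2) j + 1) t := by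
    intro t
    have e := splObj_snd (τ := D.Obj) A l j
    refine (congrArg₂ (fun p q => splG g l j (psum (fun m => g (l + m)) j + 1) t - p + q)
      (e t) (e (t + 1))).trans ?_
    exact splG_tr (fun m => (A m).2) g l j h.1 _ _ hw t
  have hY := hF.ext (n - j + 1) _ (splObj (fun m => (A m).1) l j) _ 
    (splG (fun m => g m - (A m).2 + (A (m + 1)).2) l j
        (psum (fun m => g (l + m) - (A (l + m)).2 + (A (l + m + 1)).2) j + 1))
    (dn ((trData D).splChain α l j h.1 ((trData D).blockVal α l j)))
    (D.splChain (dn α) l j h.1 (((-1 : k) ^ bsgn (fun m => (A m).2) l j) •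
      D.blockVal (dn α) l j)) (fun m _ => splObj_fst A l j m) (fun m _ => hG m)
    (fun m _ => splChain_heq α l j h.1 _ _ (blockVal_heq α l j hj) m)
  rw [spl_smul hF _ _ _ _ _ _ _ (by omega)] at hY
  refine gen_lhs hE T _ _ _ (congrArg (fun X => F.obj X.1) (splObj_zero A l j))
      (congrArg (fun X => F.obj X.1) (splObj_last A h.1 h.2))
      (congrArg Prod.snd (splObj_zero A l j)) (congrArg Prod.snd (splObj_last A h.1 h.2))
      ?_ (congrArg F.obj (splObj_fst A l j _)) (congrArg F.obj (splObj_fst A l j _)) ?_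
      _ hY _ _ _ _ _ _ _ _ _ _ ?_
  · rw [funext hG]
    exact congrArg (· + 1) (psum_splG (fun m => g m - (A m).2 + (A (m + 1)).2) h.1 h.2)
  · rw [funext hG]
  rw [← sgn_add, ← sgn_add, ← sgn_add]
  apply sgn_congr
  have h1 : Even (∑ m ∈ Finset.range (n - j + 1 + 1), (splObj A l j m).2 +
      bsgn (fun m => (A m).2) l j
      - (∑ m ∈ Finset.range (n + 1), (A m).2) - (A (l + j)).2) := by
    have := sum_spl (fun m => (A m).2) l j n hj h.2
    have e : ∑ m ∈ Finset.range (n - j + 1 + 1), (splObj A l j m).2 =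
        ∑ m ∈ Finset.range (n - j + 1 + 1), splObj (fun m => (A m).2) l j m :=
      Finset.sum_congr rfl fun m _ => splObj_snd (τ := D.Obj) A l j m
    rw [e]
    exact this
  have h2 : psum (fun m => g m - (A m).2 + (A (m + 1)).2) n = _ :=
    psum_tr g (fun m => (A m).2) n
  have h3 : psum (fun m => g m - (A m).2 + (A (m + 1)).2) (l + j) = _ :=
    psum_tr g (fun m => (A m).2) (l + j)
  rw [h2, h3]
  obtain ⟨z, hz⟩ := h1
  exact ⟨z + (A (l + j)).2 - (A n).2, by linear_combination hz⟩

lemma rhs_term {D E : DGData k} (hE : IsDGCat E) {T : TranslationData E}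
    (hT : IsTranslationData E T) (F : AInfFunData D E)
    (n : ℕ) (A : ℕ → (trData D).Obj) (g : ℕ → ℤ) (α : (trData D).Chain A g)
    (hb : -(A n).2 + (psum (fun m => g m - (A m).2 + (A (m + 1)).2) n + 1 + 1 + (A 0).2)
      = psum g n + 1 + 1) :
    eqRhs (liftTr F T) n A g α =
      ((-1 : k) ^ (∑ m ∈ Finset.range (n + 1), (A m).2 + (A n).2)) •
      PhiL hE T (A 0).2 (A n).2 (psum g n + 1 + 1) hb
        (eqRhs F n (fun m => (A m).1) (fun m => g m - (A m).2 + (A (m + 1)).2) (dn α)) := by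
  unfold eqRhs
  rw [map_add, smul_add, map_sum, Finset.smul_sum]
  congr 1
  · refine Finset.sum_congr rfl fun t ht => ?_
    split_ifs with h
    swap
    · rw [map_zero, smul_zero]; rfl
    have hsum : ∑ m ∈ Finset.range (n - t + 1), (A (t + m)).2 +
        ∑ m ∈ Finset.range (t + 1), (A m).2 =
        ∑ m ∈ Finset.range (n + 1), (A m).2 + (A t).2 := by
      have := Finset.sum_range_add (fun m => (A m).2) t (n - t + 1)
      rw [show t + (n - t + 1) = n + 1 by omega] at this
      rw [this, Finset.sum_range_succ _ t]
      ring
    have h2 : psum (fun m => g m - (A m).2 + (A (m + 1)).2) n = _ :=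
      psum_tr g (fun m => (A m).2) n
    have h3 : psum (fun m => g m - (A m).2 + (A (m + 1)).2) t = _ :=
      psum_tr g (fun m => (A m).2) t
    have ht' : t + (n - t) = n := by omega
    refine gen_rhs hE hT (congrArg (fun m => F.obj (A m).1) ht')
      (congrArg (fun m => (A m).2) ht') _ _ _ _ _ _ _ _ _ _ _ _ _ ?_
    rw [← sgn_add, ← sgn_add, ← sgn_add]
    apply sgn_congr
    rw [h2, h3]
    exact ⟨(A t).2 - (A n).2, by linear_combination hsum⟩
  · exact gen_d hE hT _ _ _ (sgn_add _ _).symm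

lemma lift_isAInf {D E : DGData k}
    (hE : IsDGCat E) {T : TranslationData E}
    (hT : IsTranslationData E T) {F : AInfFunData D E} (hF : IsAInfFun F) :
    IsAInfFun (liftTr F T) where
  ext n A A' g g' α α' hA hg hα := by
    rw [lift_eq, lift_eq]
    have hs : ∑ m ∈ Finset.range (n + 1), (A m).2 = ∑ m ∈ Finset.range (n + 1), (A' m).2 :=
      Finset.sum_congr rfl fun m hm => by
        rw [hA m (Nat.lt_succ_iff.mp (Finset.mem_range.mp hm))]
    have hp : psum g n = psum g' n :=
      Finset.sum_congr rfl fun m hm => hg m (Finset.mem_range.mp hm)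
    have hg2 : ∀ m, m < n → g m - (A m).2 + (A (m + 1)).2 = g' m - (A' m).2 + (A' (m + 1)).2 := by
      intro m hm
      rw [hg m hm, hA m hm.le, hA (m + 1) hm]
    rw [hs]
    refine smul_heq' E (congrArg (liftTr F T).obj (hA 0 (Nat.zero_le _)))
      (congrArg (liftTr F T).obj (hA n le_rfl)) (by rw [hp]) _ ?_
    refine Phi_heq E T (congrArg (fun X => F.obj X.1) (hA 0 (Nat.zero_le _)))
      (congrArg (fun X => F.obj X.1) (hA n le_rfl)) (congrArg Prod.snd (hA 0 (Nat.zero_le _)))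
      (congrArg Prod.snd (hA n le_rfl))
      (congrArg (· + 1) (Finset.sum_congr rfl fun m hm => hg2 m (Finset.mem_range.mp hm))) ?_
    exact hF.ext n _ _ _ _ _ _ (fun m hm => congrArg Prod.fst (hA m hm)) hg2
      (fun m hm => (dn_heq α m).trans ((hα m hm).trans (dn_heq α' m).symm))
  map_add n A g α m hm u v := by
    have e : ∀ w, (liftTr F T).f n A g ((trData D).upd0 α m w) = _ := fun w =>
      lift_eq F T n A g _
    simp only [dn_upd0] at e
    refine (e _).trans ((Eq.trans ?_ (congrArg₂ (· + ·) (e u) (e v)).symm))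
    have e2 := hF.map_add n _ _ (dn α) m hm (D.cast (by ring)
      (u : D.Hom (A m).1 (A (m+1)).1 (g m + 1 - (A m).2 + (A (m+1)).2))) (D.cast (by ring)
      (v : D.Hom (A m).1 (A (m+1)).1 (g m + 1 - (A m).2 + (A (m+1)).2)))
    replace e2 := (congrArg (fun z => F.f n _ _ (D.upd0 (dn α) m z))
      (cast_add' D _ _ _)).trans e2
    refine Eq.trans ?_ (smul_add _ _ _)
    refine congrArg _ ?_
    refine (congrArg (PhiL hE T _ _ _ _) e2).trans (map_add _ _ _)
  map_smul n A g α m hm c u := by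
    have e : ∀ w, (liftTr F T).f n A g ((trData D).upd0 α m w) = _ := fun w =>
      lift_eq F T n A g _
    simp only [dn_upd0] at e
    refine (e _).trans ((Eq.trans ?_ (congrArg (c • ·) (e u)).symm))
    have e2 := hF.map_smul n _ _ (dn α) m hm c (D.cast (by ring)
      (u : D.Hom (A m).1 (A (m+1)).1 (g m + 1 - (A m).2 + (A (m+1)).2)))
    replace e2 := (congrArg (fun z => F.f n _ _ (D.upd0 (dn α) m z))
      (cast_smul' D _ c _)).trans e2
    exact gen_smul hE T _ _ _ _ e2
  unit_one A₀ := by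
    rw [lift_eq]
    have hs : ((-1 : k) ^ (∑ m ∈ Finset.range (1 + 1), A₀.2)) = 1 := by
      have := sgn_congr (k := k) (a := ∑ m ∈ Finset.range (1 + 1), A₀.2) (b := 0)
        ⟨A₀.2, by simp; ring⟩
      simpa using this
    refine Eq.trans (congrArg (· • _) hs) ?_
    refine (one_smul _ _).trans ?_
    apply eq_of_heq
    refine HEq.trans ?_ (cast_heq' E _ _).symm
    refine HEq.trans ?_ (Phi_id hE hT (X := F.obj A₀.1) (i := A₀.2) (b := 0) (by ring))
    refine Phi_heq E T rfl rfl rfl rfl (by simp [psum]) ?_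
    have e := hF.unit_one A₀.1
    refine HEq.trans ?_ ((heq_of_eq e).trans (cast_heq' E _ _))
    refine hF.ext 1 _ _ _ _ _ _ (fun _ _ => rfl) (fun _ _ => by ring) (fun m _ => ?_)
    refine (dn_heq _ _).trans ?_
    refine (cast_heq' (trData D) _ _).trans ?_
    exact (cast_heq' D _ _).trans (cast_heq' D _ _).symm
  unit_vanish n A g α m hn hm hA hg hα := by
    have e := hF.unit_vanish n _ _ (dn α) m hn hm (congrArg Prod.fst hA)
      (by rw [hA, hg]; ring) ((dn_heq α m).trans (hα.trans (cast_heq' D _ _)))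
    refine (lift_eq F T n A g α).trans ?_
    exact gen_zero hE T _ _ e
  eqn n hn A g α := by
    have hb : -(A n).2 + (psum (fun m => g m - (A m).2 + (A (m + 1)).2) n + 1 + 1 + (A 0).2)
      = psum g n + 1 + 1 := by
      have h2 : psum (fun m => g m - (A m).2 + (A (m + 1)).2) n = _ :=
        psum_tr g (fun m => (A m).2) n
      rw [h2]; ring
    rw [lhs_term hE T hF n A g α hb, rhs_term hE hT F n A g α hb, hF.eqn n hn]

lemma lift_ext {D E : DGData k} (T : TranslationData E)
    {F : AInfFunData D E} (hF : IsAInfFun F)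
    (n : ℕ) (A : ℕ → D.Obj) (g : ℕ → ℤ) (α : D.Chain A g) :
      (liftTr F T).f n (fun m => (A m, (0 : ℤ))) g
          (fun m => D.cast (by ring) (α m)) =
        E.cast (by ring)
          (E.comp (T.sInv (F.obj (A n)) 0)
            (E.comp (F.f n A g α) (T.s (F.obj (A 0)) 0))) := by
  refine (lift_eq F T n _ g _).trans ?_
  refine Eq.trans (congrArg (· • _) (?_ : _ = (1 : k))) ((one_smul _ _).trans ?_)
  · simp
  · apply eq_of_heq
    have hg : ∀ m, g m - 0 + 0 = g m := fun m => by ring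
    refine Phi_heq E T (b' := psum g n + 1) (h' := by ring) rfl rfl rfl rfl
      (congrArg (psum · n + 1) (funext hg)) ?_
    exact hF.ext n _ _ _ _ _ _ (fun _ _ => rfl) (fun m _ => hg m)
      (fun m _ => (dn_heq _ m).trans (cast_heq' D _ _))

end Aux
end P

namespace P

/-- **Statement 12.** Let `A` be a dg category and `B` a dg category with
translations, and let `f : A_∞ → B_∞` be an A∞-functor.  Then the lift `F`
defined in Construction `lift_to_translations` (formalized as `liftTr`), with
`F(A[i]) := f(A)[i]` and
`F_n(s⟨i_{n+1}|α^n|i_n⟩, …, s⟨i₂|α^1|i₁⟩)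
  = ⟨i_{n+1}|f_n(sα^n,…,sα^1)|i₁⟩ ⬝ (-1)^{i₁+⋯+i_{n+1}}`,
is an A∞-functor `(A^[•])_∞ → B_∞`, and it extends `f` along the inclusion
`A → A^[•]`, `A ↦ A[0]` (on chains of objects `A[0]` its value is `f_n`,
viewed through the structural isomorphisms of the chosen `0`-th
translations). -/
theorem statement_12 {k : Type} [Field k] (D E : DGData k)
    (hD : IsDGCat D) (hE : IsDGCat E) (T : TranslationData E)
    (hT : IsTranslationData E T) (F : AInfFunData D E) (hF : IsAInfFun F) :
    IsAInfFun (liftTr F T) ∧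
    ∀ (n : ℕ) (A : ℕ → D.Obj) (g : ℕ → ℤ) (α : D.Chain A g),
      (liftTr F T).f n (fun m => (A m, (0 : ℤ))) g
          (fun m => D.cast (by ring) (α m)) =
        E.cast (by ring)
          (E.comp (T.sInv (F.obj (A n)) 0)
            (E.comp (F.f n A g α) (T.s (F.obj (A 0)) 0))) := by
  exact ⟨lift_isAInf hE hT hF, lift_ext T hF⟩

end P
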